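/- arXiv:1003.0887 — 2 statements merged into one kernel-verified Lean document; each statement's English description precedes it below -/
import Mathlib

section
/- Let k be a radial kernel on ℝ^d, i.e., k(x,y) = ∫_{[0,∞)} e^{−t‖x−y‖²₂} dν(t) for a finite nonnegative Borel measure ν on [0,∞) with ν ≠ 0. Then k is cc-universal if and only if k is characteristic to the set of all Borel probability measures on ℝ^d. -/
open MeasureTheory Filter Topology RealInnerProductSpace

/-! Both properties separate points, hence force the feature map `Φ` of `k` to be injective. If `Φ`
is injective on a nontrivial space, then `k` is not constant, so the support of `ν` contains some
`t > 0`. By Schur's product theorem Gaussian kernels are positive semidefinite. Hence for measurable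
`S` the kernel `∫ t in S, exp (-t ‖x - y‖²) ∂ν` is dominated by `k`, and by Aronszajn's theorem its
sections lie in the RKHS of `k`. Averaging over small neighbourhoods `S` of `t` approximates the
Gaussian `exp (-t ‖x - y‖²)` by functions of the RKHS, boundedly and locally uniformly in `x`.
Division by `exp (-t ‖x‖²)` turns these Gaussians into multiples of the exponentials `exp ⟪a, x⟫`,
which are dense on compact sets by Stone-Weierstrass, so that `k` is cc-universal, and whose
integrals, the values of the moment generating function, determine a measure, so that `k` is
characteristic. -/

section PositiveSemidefinite

variable {X H : Type*} [NormedAddCommGroup H] [InnerProductSpace ℝ H]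

/-- The bilinear form `(c, c') ↦ ∑ x, ∑ y, c x * K x y * c' y` of a kernel `K`, through which
positive semidefiniteness of `K` becomes a statement about bilinear forms. Kernels on `X` are
encoded as matrices indexed by the possibly infinite type `X`. -/
noncomputable def kernelForm (K : Matrix X X ℝ) : LinearMap.BilinForm ℝ (X →₀ ℝ) :=
  Finsupp.linearCombination ℝ fun x ↦ Finsupp.linearCombination ℝ (K x)

lemma kernelForm_apply (K : Matrix X X ℝ) (c c' : X →₀ ℝ) :
    kernelForm K c c' = c.sum fun x a ↦ c'.sum fun y b ↦ a * K x y * b := by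
  simp [kernelForm, Finsupp.linearCombination_apply, Finsupp.sum, Finset.mul_sum, mul_assoc,
    mul_comm (K _ _)]

lemma kernelForm_single_right (K : Matrix X X ℝ) (c : X →₀ ℝ) (y : X) :
    kernelForm K c (Finsupp.single y 1) = Finsupp.linearCombination ℝ (K · y) c := by
  simp [kernelForm, Finsupp.linearCombination_apply, Finsupp.sum]

lemma kernelForm_sub (K K' : Matrix X X ℝ) :
    kernelForm (K - K') = kernelForm K - kernelForm K' := by
  ext x y
  simp [kernelForm]

lemma kernelForm_gram (Φ : X → H) (c c' : X →₀ ℝ) :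
    kernelForm (Matrix.gram ℝ Φ) c c' =
      ⟪Finsupp.linearCombination ℝ Φ c, Finsupp.linearCombination ℝ Φ c'⟫ := by
  simp only [kernelForm_apply, Matrix.gram_apply, Finsupp.linearCombination_apply,
    Finsupp.sum_inner, Finsupp.inner_sum, real_inner_smul_left, real_inner_smul_right]
  rw [Finsupp.sum_comm]
  simp only [mul_comm]

lemma isSymm_kernelForm {K : Matrix X X ℝ} (hK : K.IsHermitian) :
    LinearMap.IsSymm (kernelForm K) := by
  refine ⟨fun c c' ↦ ?_⟩
  have hsymm (x y : X) : K x y = K y x := (hK.apply x y).symm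
  rw [RingHom.id_apply, kernelForm_apply, kernelForm_apply, Finsupp.sum_comm]
  refine Finsupp.sum_congr fun x _ ↦ Finsupp.sum_congr fun y _ ↦ ?_
  rw [hsymm]
  ring

lemma posSemidef_iff_kernelForm_nonneg {K : Matrix X X ℝ} :
    K.PosSemidef ↔ K.IsHermitian ∧ ∀ c, 0 ≤ kernelForm K c c := by
  simp only [kernelForm_apply, Matrix.PosSemidef, star_trivial]

lemma posSemidef_of_inner_eq {K : Matrix X X ℝ} (Φ : X → H)
    (hK : ∀ x y, K x y = ⟪Φ x, Φ y⟫) : K.PosSemidef := by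
  obtain rfl : K = Matrix.gram ℝ Φ := Matrix.ext hK
  refine posSemidef_iff_kernelForm_nonneg.2 ⟨Matrix.isHermitian_gram ℝ Φ, fun c ↦ ?_⟩
  rw [kernelForm_gram]
  exact real_inner_self_nonneg

lemma posSemidef_map_pow {A : Matrix X X ℝ} (hA : A.PosSemidef) (n : ℕ) :
    (A.map (· ^ n)).PosSemidef := by
  induction n with
  | zero => exact posSemidef_of_inner_eq (fun _ ↦ (1 : ℝ)) (by simp)
  | succ n ih =>
    simpa only [Matrix.map, Matrix.hadamard, Matrix.of_apply, pow_succ] using ih.hadamard hA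

lemma posSemidef_of_hasSum {ι : Type*} {K : ι → Matrix X X ℝ} {A : Matrix X X ℝ}
    (hK : ∀ i, (K i).PosSemidef) (hA : ∀ x y, HasSum (fun i ↦ K i x y) (A x y)) :
    A.PosSemidef := by
  refine ⟨Matrix.IsHermitian.ext fun x y ↦ (hA y x).unique ?_, fun c ↦ ?_⟩
  · simpa only [fun i ↦ show K i y x = K i x y from (hK i).1.apply x y] using hA x y
  · exact (hasSum_sum fun x _ ↦ hasSum_sum fun y _ ↦
      ((hA x y).mul_left _).mul_right _).nonneg fun i ↦ (hK i).2 c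

lemma posSemidef_map_exp {A : Matrix X X ℝ} (hA : A.PosSemidef) :
    (A.map Real.exp).PosSemidef := by
  refine posSemidef_of_hasSum (K := fun n : ℕ ↦ (n.factorial : ℝ)⁻¹ • A.map (· ^ n))
    (fun n ↦ (posSemidef_map_pow hA n).smul (by positivity)) fun x y ↦ ?_
  simpa [Real.exp_eq_exp_ℝ] using NormedSpace.exp_series_hasSum_exp' (𝕂 := ℝ) (A x y)

lemma posSemidef_integral {Ω : Type*} [MeasurableSpace Ω] {μ : Measure Ω} {K : Ω → Matrix X X ℝ}
    (hK : ∀ᵐ ω ∂μ, (K ω).PosSemidef) (hint : ∀ x y, Integrable (fun ω ↦ K ω x y) μ) :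
    (Matrix.of fun x y ↦ ∫ ω, K ω x y ∂μ).PosSemidef := by
  refine posSemidef_iff_kernelForm_nonneg.2 ⟨.ext fun x y ↦ integral_congr_ae ?_, fun c ↦ ?_⟩
  · filter_upwards [hK] with ω hω using hω.1.apply x y
  · have hint' (x y : X) : Integrable (fun ω ↦ c x * K ω x y * c y) μ :=
      ((hint x y).const_mul _).mul_const _
    have hform : kernelForm (.of fun x y ↦ ∫ ω, K ω x y ∂μ) c c = ∫ ω, kernelForm (K ω) c c ∂μ := by
      simp only [kernelForm_apply, Matrix.of_apply, Finsupp.sum]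
      rw [integral_finsetSum _ fun x _ ↦ integrable_finsetSum _ fun y _ ↦ hint' x y]
      refine Finset.sum_congr rfl fun x _ ↦ ?_
      rw [integral_finsetSum _ fun y _ ↦ hint' x y]
      simp only [integral_mul_const, integral_const_mul]
    rw [hform]
    exact integral_nonneg_of_ae (hK.mono fun ω hω ↦ (posSemidef_iff_kernelForm_nonneg.1 hω).2 c)

lemma sq_linearCombination_le_of_posSemidef {K : Matrix X X ℝ} (hK : K.PosSemidef)
    (c : X →₀ ℝ) (y : X) :
    Finsupp.linearCombination ℝ (K · y) c ^ 2 ≤ kernelForm K c c * K y y := by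
  have h := (kernelForm K).apply_sq_le_of_symm (posSemidef_iff_kernelForm_nonneg.1 hK).2
    (isSymm_kernelForm hK.1) c (.single y 1)
  rw [kernelForm_single_right, kernelForm_single_right] at h
  simpa using h

end PositiveSemidefinite

section ReproducingKernel

variable {X H : Type*} [NormedAddCommGroup H] [InnerProductSpace ℝ H] {Φ : X → H}

lemma exists_inner_eq_of_norm_linearCombination_le [CompleteSpace H] {F : X → ℝ} {C : ℝ}
    (hF : ∀ c, ‖Finsupp.linearCombination ℝ F c‖ ≤ C * ‖Finsupp.linearCombination ℝ Φ c‖) :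
    ∃ f : H, ∀ x, ⟪f, Φ x⟫ = F x := by
  obtain ⟨G, hG, -⟩ := exists_extension_norm_eq _ ((Finsupp.linearCombination ℝ F).compLeftInverse
    (Finsupp.linearCombination ℝ Φ))
  refine ⟨(InnerProductSpace.toDual ℝ H).symm G, fun x ↦ ?_⟩
  rw [InnerProductSpace.toDual_symm_apply]
  have h := LinearMap.compLeftInverse_apply_of_bdd _ _ ⟨C, hF⟩ (.single x 1) (Φ x) (by simp)
  simpa using (hG _).trans h

/-- Aronszajn's inclusion theorem. -/
lemma exists_inner_eq_of_posSemidef_gram_sub [CompleteSpace H] {K : Matrix X X ℝ}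
    (hK : K.PosSemidef) (hsub : (Matrix.gram ℝ Φ - K).PosSemidef) (y : X) :
    ∃ f : H, ∀ x, ⟪f, Φ x⟫ = K x y := by
  refine exists_inner_eq_of_norm_linearCombination_le (C := √(K y y)) fun c ↦ ?_
  have hle : kernelForm K c c ≤ ‖Finsupp.linearCombination ℝ Φ c‖ ^ 2 := by
    rw [← real_inner_self_eq_norm_sq, ← kernelForm_gram, ← sub_nonneg]
    simpa [kernelForm_sub] using (posSemidef_iff_kernelForm_nonneg.1 hsub).2 c
  refine abs_le_of_sq_le_sq ?_ (by positivity)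
  calc Finsupp.linearCombination ℝ (K · y) c ^ 2
      ≤ kernelForm K c c * K y y := sq_linearCombination_le_of_posSemidef hK c y
    _ ≤ ‖Finsupp.linearCombination ℝ Φ c‖ ^ 2 * K y y := by
      gcongr
      exact hK.diag_nonneg
    _ = (√(K y y) * ‖Finsupp.linearCombination ℝ Φ c‖) ^ 2 := by
      rw [mul_pow, Real.sq_sqrt hK.diag_nonneg, mul_comm]

lemma exists_inner_eq_setIntegral [CompleteSpace H] {Ω : Type*} [MeasurableSpace Ω]
    {μ : Measure Ω} {K : Ω → Matrix X X ℝ} (hK : ∀ᵐ ω ∂μ, (K ω).PosSemidef)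
    (hint : ∀ x y, Integrable (fun ω ↦ K ω x y) μ) (hΦ : ∀ x y, ⟪Φ x, Φ y⟫ = ∫ ω, K ω x y ∂μ)
    {S : Set Ω} (hS : MeasurableSet S) (y : X) :
    ∃ f : H, ∀ x, ⟪f, Φ x⟫ = ∫ ω in S, K ω x y ∂μ := by
  have hpos (A : Set Ω) : (Matrix.of fun x y ↦ ∫ ω in A, K ω x y ∂μ).PosSemidef :=
    posSemidef_integral (ae_restrict_of_ae hK) fun x y ↦ (hint x y).integrableOn
  have hcompl : Matrix.gram ℝ Φ - (.of fun x y ↦ ∫ ω in S, K ω x y ∂μ) =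
      .of fun x y ↦ ∫ ω in Sᶜ, K ω x y ∂μ := by
    ext x y
    simp [hΦ, ← integral_add_compl hS (hint x y)]
  exact exists_inner_eq_of_posSemidef_gram_sub (hpos S) (hcompl ▸ hpos Sᶜ) y

lemma norm_sub_sq_eq_inner (x y : X) :
    ‖Φ x - Φ y‖ ^ 2 = ⟪Φ x, Φ x⟫ - 2 * ⟪Φ x, Φ y⟫ + ⟪Φ y, Φ y⟫ := by
  rw [norm_sub_sq_real, real_inner_self_eq_norm_sq, real_inner_self_eq_norm_sq]

lemma continuous_of_continuous_inner [TopologicalSpace X]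
    (h : Continuous fun p : X × X ↦ ⟪Φ p.1, Φ p.2⟫) : Continuous Φ := by
  refine continuous_iff_continuousAt.2 fun x ↦ tendsto_iff_norm_sub_tendsto_zero.2 ?_
  have hsq : Continuous fun y ↦ ⟪Φ y, Φ y⟫ - 2 * ⟪Φ y, Φ x⟫ + ⟪Φ x, Φ x⟫ := by
    have hdiag : Continuous fun y ↦ ⟪Φ y, Φ y⟫ := h.comp (.prodMk continuous_id continuous_id)
    have hleft : Continuous fun y ↦ ⟪Φ y, Φ x⟫ := h.comp (.prodMk continuous_id continuous_const)
    fun_prop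
  have hdist (y : X) : ‖Φ y - Φ x‖ = √(⟪Φ y, Φ y⟫ - 2 * ⟪Φ y, Φ x⟫ + ⟪Φ x, Φ x⟫) := by
    rw [← norm_sub_sq_eq_inner, Real.sqrt_sq (norm_nonneg _)]
  simp only [hdist]
  exact hsq.sqrt.tendsto' x 0 (by ring_nf; simp)

end ReproducingKernel

section RadialKernel

variable {E : Type*} [NormedAddCommGroup E]

/-- The Gaussian kernel `exp (-t ‖x - y‖²)` with inverse width `t`. -/
noncomputable def gaussianKernel (t : ℝ) (x y : E) : ℝ :=
  Real.exp (-(t * ‖x - y‖ ^ 2))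

lemma gaussianKernel_pos (t : ℝ) (x y : E) : 0 < gaussianKernel t x y := Real.exp_pos _

lemma continuous_gaussianKernel (t : ℝ) :
    Continuous fun p : E × E ↦ gaussianKernel t p.1 p.2 := by
  simp only [gaussianKernel]
  fun_prop

lemma abs_gaussianKernel_le_one {t : ℝ} (ht : 0 ≤ t) (x y : E) : |gaussianKernel t x y| ≤ 1 := by
  rw [gaussianKernel, Real.abs_exp, Real.exp_le_one_iff]
  exact neg_nonpos.2 (by positivity)

lemma abs_exp_neg_sub_exp_neg_le {a b : ℝ} (ha : 0 ≤ a) (hb : 0 ≤ b) :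
    |Real.exp (-a) - Real.exp (-b)| ≤ |a - b| := by
  wlog hab : a ≤ b generalizing a b
  · rw [abs_sub_comm, abs_sub_comm a]
    exact this hb ha (le_of_not_ge hab)
  have hsplit : Real.exp (-b) = Real.exp (-a) * Real.exp (-(b - a)) := by
    rw [← Real.exp_add]
    ring_nf
  have hexp : Real.exp (-b) ≤ Real.exp (-a) := Real.exp_le_exp.2 (neg_le_neg hab)
  rw [abs_of_nonneg (sub_nonneg.2 hexp), abs_sub_comm, abs_of_nonneg (sub_nonneg.2 hab)]
  calc Real.exp (-a) - Real.exp (-b) = Real.exp (-a) * (1 - Real.exp (-(b - a))) := by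
        rw [hsplit, mul_one_sub]
    _ ≤ Real.exp (-a) * (b - a) := mul_le_mul_of_nonneg_left
        (sub_le_comm.1 (Real.one_sub_le_exp_neg (b - a))) (Real.exp_nonneg _)
    _ ≤ b - a := mul_le_of_le_one_left (sub_nonneg.2 hab) (Real.exp_le_one_iff.2 (neg_nonpos.2 ha))

lemma abs_gaussianKernel_sub_le {s t : ℝ} (hs : 0 ≤ s) (ht : 0 ≤ t) (x y : E) :
    |gaussianKernel s x y - gaussianKernel t x y| ≤ |s - t| * ‖x - y‖ ^ 2 := by
  refine (abs_exp_neg_sub_exp_neg_le (by positivity) (by positivity)).trans_eq ?_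
  rw [← sub_mul, abs_mul, abs_of_nonneg (sq_nonneg ‖x - y‖)]

/-- The radial kernel `k(x, y) = ∫ exp (-t ‖x - y‖²) dν(t)` of a measure `ν`. -/
noncomputable def radialKernel (ν : Measure ℝ) (x y : E) : ℝ :=
  ∫ t, gaussianKernel t x y ∂ν

variable {ν : Measure ℝ} {H : Type*} [NormedAddCommGroup H] [InnerProductSpace ℝ H] {Φ : E → H}

lemma norm_sq_of_inner_eq_radialKernel (hΦ : ∀ x y, ⟪Φ x, Φ y⟫ = radialKernel ν x y) (x : E) :
    ‖Φ x‖ ^ 2 = ν.real Set.univ := by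
  rw [← real_inner_self_eq_norm_sq, hΦ]
  simp [radialKernel, gaussianKernel]

lemma exists_pos_mem_support_of_injective [Nontrivial E] (hν : ∀ᵐ t ∂ν, 0 ≤ t)
    (hΦ : ∀ x y, ⟪Φ x, Φ y⟫ = radialKernel ν x y) (hinj : Function.Injective Φ) :
    ∃ t ∈ ν.support, 0 < t := by
  suffices hpos : 0 < ν (Set.Ioi 0) by
    obtain ⟨t, ht₀, ht⟩ := Measure.nonempty_inter_support_of_pos hpos
    exact ⟨t, ht, ht₀⟩
  refine pos_iff_ne_zero.2 fun hzero ↦ ?_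
  have hconst (x y : E) : radialKernel ν x y = ν.real Set.univ := by
    have hle : ∀ᵐ t ∂ν, t ≤ 0 := by simpa [ae_iff, Set.Ioi] using hzero
    have hone : (gaussianKernel · x y) =ᵐ[ν] fun _ ↦ 1 := by
      filter_upwards [hν, hle] with t ht₀ ht
      simp [gaussianKernel, le_antisymm ht ht₀]
    simp [radialKernel, integral_congr_ae hone]
  obtain ⟨x, y, hxy⟩ := exists_pair_ne E
  refine hxy (hinj (sub_eq_zero.1 (norm_eq_zero.1 (sq_eq_zero_iff.1 ?_))))
  simp only [norm_sub_sq_eq_inner, hΦ, hconst]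
  ring

variable [IsFiniteMeasure ν]

lemma integrable_gaussianKernel (hν : ∀ᵐ t ∂ν, 0 ≤ t) (x y : E) :
    Integrable (fun t ↦ gaussianKernel t x y) ν :=
  .of_bound (by simp only [gaussianKernel]; fun_prop) 1
    (hν.mono fun _ ht ↦ abs_gaussianKernel_le_one ht x y)

lemma continuous_radialKernel (hν : ∀ᵐ t ∂ν, 0 ≤ t) :
    Continuous fun p : E × E ↦ radialKernel ν p.1 p.2 :=
  continuous_of_dominated (bound := fun _ ↦ 1)
    (fun p ↦ (integrable_gaussianKernel hν p.1 p.2).aestronglyMeasurable)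
    (fun p ↦ hν.mono fun _ ht ↦ abs_gaussianKernel_le_one ht p.1 p.2) (integrable_const 1)
    (ae_of_all _ continuous_gaussianKernel)

lemma continuous_of_inner_eq_radialKernel (hν : ∀ᵐ t ∂ν, 0 ≤ t)
    (hΦ : ∀ x y, ⟪Φ x, Φ y⟫ = radialKernel ν x y) : Continuous Φ :=
  continuous_of_continuous_inner (by simpa only [hΦ] using continuous_radialKernel hν)

variable [InnerProductSpace ℝ E]

lemma gaussianKernel_eq_mul_exp_inner (t : ℝ) (x y : E) : gaussianKernel t x y =
    gaussianKernel t x 0 * gaussianKernel t y 0 * Real.exp ⟪(2 * t) • y, x⟫ := by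
  simp only [gaussianKernel, sub_zero]
  rw [← Real.exp_add, ← Real.exp_add, norm_sub_sq_real, real_inner_smul_left, real_inner_comm]
  ring_nf

lemma gaussianKernel_zero_mul_exp_inner {t : ℝ} (ht : t ≠ 0) (x a : E) :
    gaussianKernel t x 0 * Real.exp ⟪a, x⟫ =
      (gaussianKernel t ((2 * t)⁻¹ • a) 0)⁻¹ * gaussianKernel t x ((2 * t)⁻¹ • a) := by
  rw [eq_inv_mul_iff_mul_eq₀ (gaussianKernel_pos t _ _).ne',
    gaussianKernel_eq_mul_exp_inner t x (_ • a), smul_inv_smul₀ (mul_ne_zero two_ne_zero ht)]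
  ring

lemma posSemidef_gaussianKernel {t : ℝ} (ht : 0 ≤ t) :
    (Matrix.of (gaussianKernel t : E → E → ℝ)).PosSemidef := by
  have hrank : (Matrix.of fun x y : E ↦ gaussianKernel t x 0 * gaussianKernel t y 0).PosSemidef :=
    posSemidef_of_inner_eq (gaussianKernel t · 0) fun x y ↦ mul_comm _ _
  have hinner : (Matrix.of fun x y : E ↦ ⟪(2 * t) • y, x⟫).PosSemidef :=
    posSemidef_of_inner_eq (fun x ↦ √(2 * t) • x) fun x y ↦ by
      rw [Matrix.of_apply, real_inner_smul_left, real_inner_smul_left, real_inner_smul_right,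
        ← mul_assoc, Real.mul_self_sqrt (by positivity), real_inner_comm]
  rw [show Matrix.of (gaussianKernel t) = Matrix.hadamard _ _ from
    Matrix.ext (gaussianKernel_eq_mul_exp_inner t)]
  exact hrank.hadamard (posSemidef_map_exp hinner)

lemma exists_inner_near_gaussianKernel [CompleteSpace H] (hν : ∀ᵐ t ∂ν, 0 ≤ t)
    (hΦ : ∀ x y, ⟪Φ x, Φ y⟫ = radialKernel ν x y) {t : ℝ} (ht₀ : 0 ≤ t) (ht : t ∈ ν.support)
    (y : E) {δ : ℝ} (hδ : 0 < δ) :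
    ∃ f : H, ∀ x, |⟪f, Φ x⟫| ≤ 1 ∧ |⟪f, Φ x⟫ - gaussianKernel t x y| ≤ δ * ‖x - y‖ ^ 2 := by
  set S := Metric.ball t δ
  have hS : ν S ≠ 0 := ((Measure.mem_support_iff_forall t).1 ht _ (Metric.ball_mem_nhds t hδ)).ne'
  obtain ⟨f, hf⟩ := exists_inner_eq_setIntegral (K := fun s ↦ .of (gaussianKernel s))
    (hν.mono fun _ ↦ posSemidef_gaussianKernel) (integrable_gaussianKernel hν) hΦ
    (measurableSet_ball (x := t) (ε := δ)) y
  have havg (x : E) : ⟪(ν.real S)⁻¹ • f, Φ x⟫ = ⨍ s in S, gaussianKernel s x y ∂ν := by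
    rw [real_inner_smul_left, hf, setAverage_eq, smul_eq_mul]
    rfl
  have hmem (x : E) {c r : ℝ} (h : ∀ s ∈ S, 0 ≤ s → |gaussianKernel s x y - c| ≤ r) :
      |⟪(ν.real S)⁻¹ • f, Φ x⟫ - c| ≤ r := by
    rw [havg]
    refine (convex_closedBall c r).set_average_mem Metric.isClosed_closedBall hS
      (measure_ne_top ν _) ?_ (integrable_gaussianKernel hν x y).integrableOn
    filter_upwards [ae_restrict_mem measurableSet_ball, ae_restrict_of_ae hν] with s using h s
  refine ⟨(ν.real S)⁻¹ • f, fun x ↦ ⟨?_, hmem x fun s hsS hs ↦ ?_⟩⟩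
  · simpa using hmem x (c := 0) (r := 1) fun s _ hs ↦ by
      simpa using abs_gaussianKernel_le_one hs x y
  · calc |gaussianKernel s x y - gaussianKernel t x y|
        ≤ |s - t| * ‖x - y‖ ^ 2 := abs_gaussianKernel_sub_le hs ht₀ x y
      _ ≤ δ * ‖x - y‖ ^ 2 := by
        gcongr
        exact hsS.le

end RadialKernel

section FeatureMap

variable {X H : Type*} [NormedAddCommGroup H] [InnerProductSpace ℝ H] {Φ : X → H}

/-- The kernel `k(x, y) = ⟪Φ x, Φ y⟫` with feature map `Φ` is cc-universal: the functions
`x ↦ ⟪f, Φ x⟫`, which make up its RKHS, are dense in `C(X, ℝ)` for uniform convergence on compact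
sets. -/
def IsCCUniversal [TopologicalSpace X] (Φ : X → H) : Prop :=
  ∀ Z : Set X, IsCompact Z → ∀ (g : C(Z, ℝ)) (ε : ℝ), 0 < ε →
    ∃ f : H, ∀ x : Z, |⟪f, Φ x⟫ - g x| ≤ ε

/-- The kernel with feature map `Φ` is characteristic: a probability measure `P` is determined by
its kernel mean embedding `∫ Φ dP`. -/
def IsCharacteristic [MeasurableSpace X] (Φ : X → H) : Prop :=
  ∀ P Q : Measure X, IsProbabilityMeasure P → IsProbabilityMeasure Q →
    ∫ x, Φ x ∂P = ∫ x, Φ x ∂Q → P = Q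

lemma IsCCUniversal.injective [TopologicalSpace X] [T1Space X] (hΦ : IsCCUniversal Φ) :
    Function.Injective Φ := by
  classical
  intro x y hxy
  by_contra hne
  have hfin : ({x, y} : Set X).Finite := Set.toFinite _
  have : DiscreteTopology ({x, y} : Set X) := hfin.instDiscreteTopology
  obtain ⟨f, hf⟩ := hΦ _ hfin.isCompact ⟨fun z ↦ if (z : X) = x then 1 else 0,
    continuous_of_discreteTopology⟩ (1 / 3) (by norm_num)
  have hx := hf ⟨x, by simp⟩
  have hy := hf ⟨y, by simp⟩
  simp only [ContinuousMap.coe_mk, if_true, if_neg (Ne.symm hne), hxy, abs_le] at hx hy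
  linarith [hx.1, hy.2]

lemma IsCharacteristic.injective [MeasurableSpace X] [MeasurableSingletonClass X] [CompleteSpace H]
    (hΦ : IsCharacteristic Φ) : Function.Injective Φ := fun x y hxy ↦
  dirac_eq_dirac_iff.1 (hΦ (.dirac x) (.dirac y) inferInstance inferInstance (by simp [hxy]))

variable [Subsingleton X]

lemma isCCUniversal_of_subsingleton [TopologicalSpace X] (hΦ : ∀ x, Φ x ≠ 0) :
    IsCCUniversal Φ := by
  intro Z _ g ε hε
  rcases isEmpty_or_nonempty Z with _ | ⟨⟨z⟩⟩
  · exact ⟨0, fun x ↦ isEmptyElim x⟩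
  · refine ⟨(g z / ⟪Φ z, Φ z⟫) • Φ z, fun x ↦ ?_⟩
    rw [Subsingleton.elim x z, real_inner_smul_left,
      div_mul_cancel₀ _ (inner_self_ne_zero.2 (hΦ z)), sub_self, abs_zero]
    exact hε.le

lemma isCharacteristic_of_subsingleton [MeasurableSpace X] : IsCharacteristic Φ := by
  intro P Q _ _ _
  ext s _
  rcases s.eq_empty_or_nonempty with rfl | hs
  · simp
  · rw [hs.eq_univ, measure_univ, measure_univ]

end FeatureMap

section Universality

/-- The restriction to `Z` of the functions in the RKHS of the kernel with feature map `Φ`. -/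
noncomputable def rkhsRestrict {X H : Type*} [TopologicalSpace X] [NormedAddCommGroup H]
    [InnerProductSpace ℝ H] {Φ : X → H} (hΦ : Continuous Φ) (Z : Set X) : H →ₗ[ℝ] C(Z, ℝ) where
  toFun f := ⟨fun x ↦ ⟪f, Φ x⟫, by fun_prop⟩
  map_add' f f' := ContinuousMap.ext fun _ ↦ inner_add_left f f' _
  map_smul' a f := ContinuousMap.ext fun _ ↦ real_inner_smul_left f _ a

lemma mem_topologicalClosure_range_rkhsRestrict {X H : Type*} [TopologicalSpace X]
    [NormedAddCommGroup H] [InnerProductSpace ℝ H] {Φ : X → H} {hΦ : Continuous Φ} {Z : Set X}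
    [CompactSpace Z] {g : C(Z, ℝ)} :
    g ∈ (LinearMap.range (rkhsRestrict hΦ Z)).topologicalClosure ↔
      ∀ ε > 0, ∃ f : H, ∀ x : Z, |⟪f, Φ x⟫ - g x| ≤ ε := by
  simp only [← SetLike.mem_coe, Submodule.topologicalClosure_coe, LinearMap.coe_range,
    mem_closure_iff_nhds_basis Metric.nhds_basis_closedBall, Set.exists_range_iff,
    Metric.mem_closedBall]
  refine forall₂_congr fun ε hε ↦ exists_congr fun f ↦ ?_
  exact ContinuousMap.dist_le hε.le

variable {E : Type*} [NormedAddCommGroup E] [InnerProductSpace ℝ E]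

/-- The restrictions to `Z` of the exponentials `x ↦ exp ⟪a, x⟫`. They form a monoid because
`exp ⟪a + b, x⟫ = exp ⟪a, x⟫ * exp ⟪b, x⟫`. -/
noncomputable def expInner (Z : Set E) : Multiplicative E →* C(Z, ℝ) where
  toFun a := ⟨fun x ↦ Real.exp ⟪a.toAdd, (x : E)⟫, by fun_prop⟩
  map_one' := by ext; simp
  map_mul' a b := by ext; simp [inner_add_left, Real.exp_add]

lemma separatesPoints_adjoin_expInner (Z : Set E) :
    (Algebra.adjoin ℝ (Set.range (expInner Z))).SeparatesPoints := by
  intro x y hxy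
  refine ⟨_, ⟨expInner Z (.ofAdd (x - y : E)), Algebra.subset_adjoin ⟨_, rfl⟩, rfl⟩, fun h ↦ hxy ?_⟩
  have hinner : ⟪(x - y : E), (x : E)⟫ = ⟪(x - y : E), (y : E)⟫ := Real.exp_injective h
  rwa [← sub_eq_zero, ← inner_sub_right, inner_self_eq_zero, sub_eq_zero, Subtype.coe_inj]
    at hinner

lemma topologicalClosure_span_expInner (Z : Set E) [CompactSpace Z] :
    (Submodule.span ℝ (Set.range (expInner Z))).topologicalClosure = ⊤ := by
  have hadjoin : Subalgebra.toSubmodule (Algebra.adjoin ℝ (Set.range (expInner Z))) =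
      Submodule.span ℝ (Set.range (expInner Z)) := by
    rw [Algebra.adjoin_eq_span, ← MonoidHom.coe_mrange, Submonoid.closure_eq]
  have htop := ContinuousMap.subalgebra_topologicalClosure_eq_top_of_separatesPoints _
    (separatesPoints_adjoin_expInner Z)
  rw [← hadjoin]
  exact congrArg Subalgebra.toSubmodule htop

/-- The restriction to `Z` of the Gaussian `x ↦ exp (-t ‖x - y‖²)`. -/
noncomputable def gaussianMap (Z : Set E) (t : ℝ) (y : E) : C(Z, ℝ) :=
  ⟨fun x ↦ gaussianKernel t (x : E) y,
    (continuous_gaussianKernel t).comp (.prodMk continuous_subtype_val continuous_const)⟩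

lemma topologicalClosure_eq_top_of_gaussianMap_mem {Z : Set E} [CompactSpace Z] {t : ℝ}
    (ht : t ≠ 0) {M : Submodule ℝ C(Z, ℝ)} (hM : ∀ y, gaussianMap Z t y ∈ M.topologicalClosure) :
    M.topologicalClosure = ⊤ := by
  set w := gaussianMap Z t 0
  have hexp : Submodule.span ℝ (Set.range (expInner Z)) ≤
      M.topologicalClosure.comap (LinearMap.mulLeft ℝ w) := by
    rw [Submodule.span_le]
    rintro _ ⟨a, rfl⟩
    have hmul : w * expInner Z a = (gaussianKernel t ((2 * t)⁻¹ • a.toAdd) 0)⁻¹ •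
        gaussianMap Z t ((2 * t)⁻¹ • a.toAdd) :=
      ContinuousMap.ext fun x ↦ gaussianKernel_zero_mul_exp_inner ht (x : E) a.toAdd
    rw [SetLike.mem_coe, Submodule.mem_comap, LinearMap.mulLeft_apply, hmul]
    exact Submodule.smul_mem _ _ (hM _)
  have hclosed : IsClosed (M.topologicalClosure.comap (LinearMap.mulLeft ℝ w) : Set C(Z, ℝ)) :=
    M.isClosed_topologicalClosure.preimage (continuous_const_mul w)
  have htop := Submodule.topologicalClosure_minimal _ hexp hclosed
  rw [topologicalClosure_span_expInner, top_le_iff] at htop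
  have hw : IsUnit w :=
    (ContinuousMap.isUnit_iff_forall_ne_zero w).2 fun x ↦ (gaussianKernel_pos t (x : E) 0).ne'
  refine Submodule.eq_top_iff'.2 fun g ↦ ?_
  obtain ⟨h, rfl⟩ := hw.dvd (a := g)
  exact (htop ▸ Submodule.mem_top : h ∈ M.topologicalClosure.comap (LinearMap.mulLeft ℝ w))

variable {ν : Measure ℝ} [IsFiniteMeasure ν] {H : Type*} [NormedAddCommGroup H]
  [InnerProductSpace ℝ H] [CompleteSpace H] {Φ : E → H}

lemma gaussianMap_mem_topologicalClosure_range_rkhsRestrict (hν : ∀ᵐ t ∂ν, 0 ≤ t)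
    (hΦ : ∀ x y, ⟪Φ x, Φ y⟫ = radialKernel ν x y) (hcont : Continuous Φ) {t : ℝ} (ht₀ : 0 ≤ t)
    (ht : t ∈ ν.support) {Z : Set E} [CompactSpace Z] (y : E) :
    gaussianMap Z t y ∈ (LinearMap.range (rkhsRestrict hcont Z)).topologicalClosure := by
  refine mem_topologicalClosure_range_rkhsRestrict.2 fun ε hε ↦ ?_
  obtain ⟨R, hR, hZR⟩ :=
    (isCompact_iff_compactSpace.2 ‹CompactSpace Z›).isBounded.subset_closedBall_lt 0 y
  obtain ⟨f, hf⟩ := exists_inner_near_gaussianKernel hν hΦ ht₀ ht y (div_pos hε (pow_pos hR 2))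
  refine ⟨f, fun x ↦ (hf x).2.trans ?_⟩
  calc ε / R ^ 2 * ‖(x : E) - y‖ ^ 2 ≤ ε / R ^ 2 * R ^ 2 := by
        gcongr
        exact mem_closedBall_iff_norm.1 (hZR x.2)
    _ = ε := div_mul_cancel₀ _ (pow_pos hR 2).ne'

lemma isCCUniversal_of_pos_mem_support (hν : ∀ᵐ t ∂ν, 0 ≤ t)
    (hΦ : ∀ x y, ⟪Φ x, Φ y⟫ = radialKernel ν x y) {t : ℝ} (ht₀ : 0 < t) (ht : t ∈ ν.support) :
    IsCCUniversal Φ := by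
  intro Z hZ g
  have : CompactSpace Z := isCompact_iff_compactSpace.1 hZ
  have hcont : Continuous Φ := continuous_of_inner_eq_radialKernel hν hΦ
  refine mem_topologicalClosure_range_rkhsRestrict (hΦ := hcont).1 ?_
  rw [topologicalClosure_eq_top_of_gaussianMap_mem ht₀.ne'
    (gaussianMap_mem_topologicalClosure_range_rkhsRestrict hν hΦ hcont ht₀.le ht)]
  exact Submodule.mem_top

end Universality

section Characteristic

lemma integral_eq_of_tendsto_inner {X H : Type*} [MeasurableSpace X] [NormedAddCommGroup H]
    [InnerProductSpace ℝ H] [CompleteSpace H] {Φ : X → H} {P Q : Measure X} [IsFiniteMeasure P]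
    [IsFiniteMeasure Q] (hP : Integrable Φ P) (hQ : Integrable Φ Q)
    (hPQ : ∫ x, Φ x ∂P = ∫ x, Φ x ∂Q) {f : ℕ → H} {C : ℝ} (hC : ∀ n x, |⟪f n, Φ x⟫| ≤ C)
    {g : X → ℝ} (hg : ∀ x, Tendsto (fun n ↦ ⟪f n, Φ x⟫) atTop (𝓝 (g x))) :
    ∫ x, g x ∂P = ∫ x, g x ∂Q := by
  have htendsto (μ : Measure X) [IsFiniteMeasure μ] (hμ : Integrable Φ μ) :
      Tendsto (fun n ↦ ⟪f n, ∫ x, Φ x ∂μ⟫) atTop (𝓝 (∫ x, g x ∂μ)) := by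
    simp only [← integral_inner hμ]
    exact tendsto_integral_of_dominated_convergence (fun _ ↦ C)
      (fun n ↦ (hμ.const_inner (f n)).aestronglyMeasurable) (integrable_const C)
      (fun n ↦ ae_of_all _ (hC n)) (ae_of_all _ hg)
  exact tendsto_nhds_unique (htendsto P hP) (hPQ ▸ htendsto Q hQ)

lemma eq_of_withDensity_eq {X : Type*} [MeasurableSpace X] {μ μ' : Measure X} {w : X → ENNReal}
    (hw : Measurable w) (hw_ne_zero : ∀ x, w x ≠ 0) (hw_ne_top : ∀ x, w x ≠ ⊤)
    (h : μ.withDensity w = μ'.withDensity w) : μ = μ' := by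
  have hinv (κ : Measure X) : (κ.withDensity w).withDensity (fun x ↦ (w x)⁻¹) = κ :=
    withDensity_inv_same hw (ae_of_all _ hw_ne_zero) (ae_of_all _ hw_ne_top)
  rw [← hinv μ, h, hinv μ']

variable {E : Type*} [NormedAddCommGroup E] [InnerProductSpace ℝ E] [MeasurableSpace E]

lemma charFun_eq_complexMGF (μ : Measure E) (w : E) :
    charFun μ w = ProbabilityTheory.complexMGF (fun x ↦ ⟪w, x⟫) μ Complex.I := by
  simp only [charFun_apply, ProbabilityTheory.complexMGF, real_inner_comm, mul_comm]

variable [BorelSpace E] [SecondCountableTopology E] [CompleteSpace E]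

lemma ext_of_integral_exp_inner {μ μ' : Measure E} [IsFiniteMeasure μ] [IsFiniteMeasure μ']
    (hint : ∀ a : E, Integrable (fun x ↦ Real.exp ⟪a, x⟫) μ)
    (h : ∀ a : E, ∫ x, Real.exp ⟪a, x⟫ ∂μ = ∫ x, Real.exp ⟪a, x⟫ ∂μ') : μ = μ' := by
  refine Measure.ext_of_charFun (funext fun w ↦ ?_)
  rw [charFun_eq_complexMGF, charFun_eq_complexMGF]
  have hmgf : ProbabilityTheory.mgf (fun x ↦ ⟪w, x⟫) μ =
      ProbabilityTheory.mgf (fun x ↦ ⟪w, x⟫) μ' := by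
    ext s
    simpa only [ProbabilityTheory.mgf, real_inner_smul_left] using h (s • w)
  have hzero : μ = 0 ↔ μ' = 0 := by
    have hmass : μ.real Set.univ = μ'.real Set.univ := by simpa using h 0
    rw [← Measure.measure_univ_eq_zero, ← measureReal_eq_zero_iff, hmass, measureReal_eq_zero_iff,
      Measure.measure_univ_eq_zero]
  have hset : ProbabilityTheory.integrableExpSet (fun x ↦ ⟪w, x⟫) μ = Set.univ :=
    Set.eq_univ_of_forall fun s ↦ by
      simpa only [ProbabilityTheory.integrableExpSet, Set.mem_ofPred_eq, real_inner_smul_left]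
        using hint (s • w)
  exact ProbabilityTheory.eqOn_complexMGF_of_mgf' hmgf hzero (by simp [hset])

lemma ext_of_integral_gaussianKernel {t : ℝ} (ht : 0 < t) {P Q : Measure E} [IsFiniteMeasure P]
    [IsFiniteMeasure Q]
    (h : ∀ y, ∫ x, gaussianKernel t x y ∂P = ∫ x, gaussianKernel t x y ∂Q) : P = Q := by
  set w : E → ENNReal := fun x ↦ ENNReal.ofReal (gaussianKernel t x 0)
  have hcont (y : E) : Continuous fun x ↦ gaussianKernel t x y :=
    (continuous_gaussianKernel t).comp (.prodMk continuous_id continuous_const)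
  have hw : Measurable w := (hcont 0).measurable.ennreal_ofReal
  have hK (μ : Measure E) [IsFiniteMeasure μ] (y : E) : Integrable (gaussianKernel t · y) μ :=
    .of_bound (hcont y).aestronglyMeasurable 1
      (ae_of_all _ fun x ↦ abs_gaussianKernel_le_one ht.le x y)
  have (μ : Measure E) [IsFiniteMeasure μ] : IsFiniteMeasure (μ.withDensity w) :=
    isFiniteMeasure_withDensity_ofReal (hK μ 0).2
  have hw_ne_zero (x : E) : w x ≠ 0 := (ENNReal.ofReal_pos.2 (gaussianKernel_pos t x 0)).ne'
  have hmul (x a : E) : (w x).toReal • Real.exp ⟪a, x⟫ =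
      (gaussianKernel t ((2 * t)⁻¹ • a) 0)⁻¹ * gaussianKernel t x ((2 * t)⁻¹ • a) := by
    rw [ENNReal.toReal_ofReal (gaussianKernel_pos t x 0).le, smul_eq_mul,
      gaussianKernel_zero_mul_exp_inner ht.ne']
  have hw_top (μ : Measure E) : ∀ᵐ x ∂μ, w x < ⊤ := ae_of_all _ fun _ ↦ ENNReal.ofReal_lt_top
  refine eq_of_withDensity_eq hw hw_ne_zero (fun _ ↦ ENNReal.ofReal_ne_top)
    (ext_of_integral_exp_inner (fun a ↦ ?_) fun a ↦ ?_)
  · rw [integrable_withDensity_iff_integrable_smul' hw (hw_top P)]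
    simpa only [hmul] using (hK P _).const_mul _
  · rw [integral_withDensity_eq_integral_toReal_smul hw (hw_top P),
      integral_withDensity_eq_integral_toReal_smul hw (hw_top Q)]
    simp only [hmul, integral_const_mul, h]

variable {ν : Measure ℝ} [IsFiniteMeasure ν] {H : Type*} [NormedAddCommGroup H]
  [InnerProductSpace ℝ H] [CompleteSpace H] {Φ : E → H}

lemma isCharacteristic_of_pos_mem_support (hν : ∀ᵐ t ∂ν, 0 ≤ t)
    (hΦ : ∀ x y, ⟪Φ x, Φ y⟫ = radialKernel ν x y) {t : ℝ} (ht₀ : 0 < t) (ht : t ∈ ν.support) :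
    IsCharacteristic Φ := by
  intro P Q _ _ hPQ
  have hint (μ : Measure E) [IsFiniteMeasure μ] : Integrable Φ μ :=
    .of_bound (continuous_of_inner_eq_radialKernel hν hΦ).aestronglyMeasurable √(ν.real Set.univ)
      (ae_of_all _ fun x ↦ Real.le_sqrt_of_sq_le (norm_sq_of_inner_eq_radialKernel hΦ x).le)
  refine ext_of_integral_gaussianKernel ht₀ fun y ↦ ?_
  choose f hf using fun n : ℕ ↦
    exists_inner_near_gaussianKernel hν hΦ ht₀.le ht y (Nat.one_div_pos_of_nat (n := n))
  refine integral_eq_of_tendsto_inner (hint P) (hint Q) hPQ (fun n x ↦ (hf n x).1) fun x ↦ ?_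
  refine tendsto_iff_norm_sub_tendsto_zero.2 (squeeze_zero (fun n ↦ norm_nonneg _)
    (fun n ↦ (hf n x).2) ?_)
  simpa using (tendsto_one_div_add_atTop_nhds_zero_nat (𝕜 := ℝ)).mul_const (‖x - y‖ ^ 2)

end Characteristic

section Equivalence

variable {E : Type*} [NormedAddCommGroup E] [InnerProductSpace ℝ E]
  {ν : Measure ℝ} [IsFiniteMeasure ν] {H : Type*} [NormedAddCommGroup H] [InnerProductSpace ℝ H]
  [CompleteSpace H] {Φ : E → H}

lemma isCCUniversal_iff_injective (hν : ∀ᵐ t ∂ν, 0 ≤ t) (hνne : ν ≠ 0)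
    (hΦ : ∀ x y, ⟪Φ x, Φ y⟫ = radialKernel ν x y) :
    IsCCUniversal Φ ↔ Function.Injective Φ := by
  refine ⟨IsCCUniversal.injective, fun hinj ↦ ?_⟩
  rcases subsingleton_or_nontrivial E with _ | _
  · refine isCCUniversal_of_subsingleton fun x hx ↦ hνne ?_
    rw [← Measure.measure_univ_eq_zero, ← measureReal_eq_zero_iff,
      ← norm_sq_of_inner_eq_radialKernel hΦ x, hx, norm_zero, zero_pow two_ne_zero]
  · obtain ⟨t, ht, ht₀⟩ := exists_pos_mem_support_of_injective hν hΦ hinj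
    exact isCCUniversal_of_pos_mem_support hν hΦ ht₀ ht

lemma isCharacteristic_iff_injective [CompleteSpace E] [MeasurableSpace E] [BorelSpace E]
    [SecondCountableTopology E] (hν : ∀ᵐ t ∂ν, 0 ≤ t)
    (hΦ : ∀ x y, ⟪Φ x, Φ y⟫ = radialKernel ν x y) :
    IsCharacteristic Φ ↔ Function.Injective Φ := by
  refine ⟨IsCharacteristic.injective, fun hinj ↦ ?_⟩
  rcases subsingleton_or_nontrivial E with _ | _
  · exact isCharacteristic_of_subsingleton
  · obtain ⟨t, ht, ht₀⟩ := exists_pos_mem_support_of_injective hν hΦ hinj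
    exact isCharacteristic_of_pos_mem_support hν hΦ ht₀ ht

end Equivalence

theorem stmt16_general {E : Type*} [NormedAddCommGroup E] [InnerProductSpace ℝ E] [CompleteSpace E]
    [SecondCountableTopology E] [MeasurableSpace E] [BorelSpace E]
    (ν : Measure ℝ) [IsFiniteMeasure ν] (hν0 : ν (Set.Iio (0 : ℝ)) = 0) (hνne : ν ≠ 0)
    {H : Type*} [NormedAddCommGroup H] [InnerProductSpace ℝ H] [CompleteSpace H] (Φ : E → H)
    (hΦ : ∀ x y, ⟪Φ x, Φ y⟫ = radialKernel ν x y) :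
    IsCCUniversal Φ ↔ IsCharacteristic Φ := by
  have hν : ∀ᵐ t ∂ν, 0 ≤ t := by simpa [ae_iff, Set.Iio] using hν0
  rw [isCCUniversal_iff_injective hν hνne hΦ, isCharacteristic_iff_injective hν hΦ]

/-- Let `k(x,y) = ∫_{[0,∞)} e^{−t‖x−y‖²} dν(t)` be a radial kernel on
`ℝᵈ`, where `ν ≠ 0` is a finite nonnegative Borel measure supported on `[0,∞)`, and let
`H` be its RKHS.  Then `k` is cc-universal iff `k` is characteristic to the set of all
Borel probability measures on `ℝᵈ`, i.e. `P ↦ ∫ k(·,x) dP(x) = ∫ Φ dP` is injective on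
Borel probability measures. -/
theorem stmt16 {d : ℕ}
    (ν : Measure ℝ) [IsFiniteMeasure ν] (hν0 : ν (Set.Iio (0 : ℝ)) = 0) (hνne : ν ≠ 0)
    (k : EuclideanSpace ℝ (Fin d) → EuclideanSpace ℝ (Fin d) → ℝ)
    (hkν : ∀ x y, k x y = ∫ t, Real.exp (-(t * ‖x - y‖ ^ 2)) ∂ν)
    {H : Type*} [NormedAddCommGroup H] [InnerProductSpace ℝ H] [CompleteSpace H]
    (T : H →ₗ[ℝ] (EuclideanSpace ℝ (Fin d) → ℝ)) (hT : Function.Injective T)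
    (Φ : EuclideanSpace ℝ (Fin d) → H)
    (hk : ∀ x y, k x y = ⟪Φ x, Φ y⟫)
    (hrepro : ∀ (f : H) x, T f x = ⟪f, Φ x⟫) :
    (∀ (Z : Set (EuclideanSpace ℝ (Fin d))), IsCompact Z →
        ∀ (g : C(Z, ℝ)) (ε : ℝ), 0 < ε →
          ∃ f : H, ∀ x : Z, |T f (x : EuclideanSpace ℝ (Fin d)) - g x| ≤ ε) ↔
      (∀ P Q : Measure (EuclideanSpace ℝ (Fin d)),
        IsProbabilityMeasure P → IsProbabilityMeasure Q →
        (∫ x, Φ x ∂P) = (∫ x, Φ x ∂Q) → P = Q) := by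
  simp only [hrepro]
  exact stmt16_general ν hν0 hνne Φ fun x y ↦ (hk x y).symm.trans (hkν x y)
end

section
/- Let X be a measurable space, let k be a measurable bounded symmetric positive definite kernel on X with RKHS H, and let μ be a finite signed Borel measure on X. Then there exists a unique element λ_μ ∈ H such that ∫_X f dμ = ⟨f, λ_μ⟩_H for all f ∈ H, and λ_μ is given pointwise by λ_μ(u) = ∫_X k(u,x) dμ(x) for all u ∈ X; in particular, ∫_X f(x) dμ(x) = ⟨f, ∫_X k(·,x) dμ(x)⟩_H for every f ∈ H. -/
open MeasureTheory Filter Topology RealInnerProductSpace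

/-- Integral of a real-valued function with respect to a finite signed measure,
defined via the Jordan decomposition. -/
noncomputable def svInt {X : Type*} [MeasurableSpace X]
    (μ : MeasureTheory.SignedMeasure X) (f : X → ℝ) : ℝ :=
  (∫ x, f x ∂μ.toJordanDecomposition.posPart) - ∫ x, f x ∂μ.toJordanDecomposition.negPart

/-!
Suppose that `x ↦ ⟪Φ x, f⟫` is `ν`-integrable for every `f : H`.  The resulting linear map
`H → L¹(ν)` has closed graph: convergence in `H` forces pointwise convergence, and convergence in
`L¹(ν)` forces a.e. convergence along a subsequence.  By the closed graph theorem
`f ↦ ∫ ⟪Φ x, f⟫ dν` is continuous, and the Riesz representation theorem produces its representing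
vector.  A signed measure is handled through its Jordan decomposition, and the pointwise formula is
the representation property applied to `f = Φ u`.

For a bounded measurable kernel, the vectors `f` with `x ↦ ⟪Φ x, f⟫` measurable form a closed
subspace which contains every `Φ y` and every vector orthogonal to all the `Φ y`, hence it is all of
`H`; boundedness of `‖Φ x‖² = k x x` then gives integrability.
-/

section WeakIntegral

variable {X 𝕜 E F H : Type*} [MeasurableSpace X] {ν : Measure X}

theorem continuous_toL1_clm_apply [NontriviallyNormedField 𝕜]
    [NormedAddCommGroup E] [NormedSpace 𝕜 E] [CompleteSpace E]
    [NormedAddCommGroup F] [NormedSpace 𝕜 F] [CompleteSpace F]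
    {φ : X → E →L[𝕜] F} (hφ : ∀ e, Integrable (fun x => φ x e) ν) :
    Continuous fun e => (hφ e).toL1 := by
  let G : E →ₗ[𝕜] X →₁[ν] F :=
    { toFun := fun e => (hφ e).toL1
      map_add' := fun e e' => by
        simp only [map_add]
        exact Integrable.toL1_add _ _ (hφ e) (hφ e')
      map_smul' := fun c e => by
        simp only [map_smul]
        exact Integrable.toL1_smul _ (hφ e) c }
  refine G.continuous_of_seq_closed_graph fun u e g hu hGu => ?_
  obtain ⟨n, hn, hae⟩ := (tendstoInMeasure_of_tendsto_Lp hGu).exists_seq_tendsto_ae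
  refine Lp.ext ?_
  filter_upwards [hae, ae_all_iff.2 fun i => (hφ (u i)).coeFn_toL1, (hφ e).coeFn_toL1]
    with x hx hux hex
  have h_eval : Tendsto (fun i => φ x (u (n i))) atTop (𝓝 (φ x e)) :=
    ((φ x).continuous.tendsto e).comp (hu.comp hn.tendsto_atTop)
  have h_sub : Tendsto (fun i => φ x (u (n i))) atTop (𝓝 (g x)) :=
    hx.congr fun i => hux (n i)
  exact (tendsto_nhds_unique h_sub h_eval).trans hex.symm

theorem continuous_integral_clm_apply [NontriviallyNormedField 𝕜]
    [NormedAddCommGroup E] [NormedSpace 𝕜 E] [CompleteSpace E]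
    [NormedAddCommGroup F] [NormedSpace 𝕜 F] [NormedSpace ℝ F] [CompleteSpace F]
    {φ : X → E →L[𝕜] F} (hφ : ∀ e, Integrable (fun x => φ x e) ν) :
    Continuous fun e => ∫ x, φ x e ∂ν := by
  refine (continuous_integral.comp (continuous_toL1_clm_apply hφ)).congr fun e => ?_
  exact integral_congr_ae (hφ e).coeFn_toL1

variable [RCLike 𝕜] [NormedAddCommGroup H] [InnerProductSpace 𝕜 H] [CompleteSpace H] {Φ : X → H}

theorem exists_inner_eq_integral_inner (hΦ : ∀ f, Integrable (fun x => inner 𝕜 (Φ x) f) ν) :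
    ∃ m : H, ∀ f, inner 𝕜 m f = ∫ x, inner 𝕜 (Φ x) f ∂ν := by
  let L : StrongDual 𝕜 H :=
    { toFun := fun f => ∫ x, inner 𝕜 (Φ x) f ∂ν
      map_add' := fun f g => by
        simpa only [inner_add_right] using integral_add (hΦ f) (hΦ g)
      map_smul' := fun c f => by
        simpa only [inner_smul_right] using! integral_const_mul c _
      cont := continuous_integral_clm_apply (φ := fun x => innerSL 𝕜 (Φ x)) hΦ }
  exact ⟨(InnerProductSpace.toDual 𝕜 H).symm L, fun f => InnerProductSpace.toDual_symm_apply⟩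

end WeakIntegral

section WeakMeasurability

variable {X 𝕜 H : Type*} [MeasurableSpace X] [RCLike 𝕜] [NormedAddCommGroup H]
  [InnerProductSpace 𝕜 H] {Φ : X → H}

variable (𝕜 Φ) in
/-- The subspace of vectors against which `Φ` is weakly measurable; weak measurability of `Φ` means
that it is all of `H`. -/
def measurableInnerSubmodule : Submodule 𝕜 H where
  carrier := {f | Measurable fun x => inner 𝕜 (Φ x) f}
  add_mem' {f g} hf hg := by
    simpa only [Set.mem_ofPred_eq, inner_add_right] using Measurable.fun_add hf hg
  zero_mem' := by simp
  smul_mem' c f hf := by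
    simpa only [Set.mem_ofPred_eq, inner_smul_right] using Measurable.const_mul hf c

theorem mem_measurableInnerSubmodule {f : H} :
    f ∈ measurableInnerSubmodule 𝕜 Φ ↔ Measurable fun x => inner 𝕜 (Φ x) f :=
  Iff.rfl

theorem isClosed_measurableInnerSubmodule :
    IsClosed (measurableInnerSubmodule 𝕜 Φ : Set H) := by
  refine IsSeqClosed.isClosed fun u f hu huf => ?_
  exact measurable_of_tendsto_metrizable (f := fun n x => inner 𝕜 (Φ x) (u n)) hu
    (tendsto_pi_nhds.2 fun x => tendsto_const_nhds.inner huf)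

variable [CompleteSpace H]

theorem measurable_inner_of_forall_measurable_inner
    (hΦ : ∀ y, Measurable fun x => inner 𝕜 (Φ x) (Φ y)) (f : H) :
    Measurable fun x => inner 𝕜 (Φ x) f := by
  set M := measurableInnerSubmodule 𝕜 Φ
  have horth : Mᗮ ≤ M := fun g hg => by
    have hzero : ∀ x, inner 𝕜 (Φ x) g = 0 := fun x => hg (Φ x) (hΦ x)
    simp only [M, mem_measurableInnerSubmodule, hzero, measurable_const]
  have htop : M.topologicalClosure = ⊤ := by
    rw [Submodule.topologicalClosure_eq_top_iff, ← le_bot_iff, ← M.inf_orthogonal_eq_bot]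
    exact le_inf horth le_rfl
  rw [isClosed_measurableInnerSubmodule.submodule_topologicalClosure_eq] at htop
  exact mem_measurableInnerSubmodule.1 (htop ▸ Submodule.mem_top)

theorem integrable_inner_of_hasFiniteIntegral {ν : Measure X}
    (hΦ : ∀ y, Measurable fun x => inner 𝕜 (Φ x) (Φ y)) (hfin : HasFiniteIntegral Φ ν) (f : H) :
    Integrable (fun x => inner 𝕜 (Φ x) f) ν := by
  refine ⟨(measurable_inner_of_forall_measurable_inner hΦ f).aestronglyMeasurable, ?_⟩
  exact (hfin.norm.mul_const ‖f‖).mono' (ae_of_all ν fun x => norm_inner_le_norm (Φ x) f)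

end WeakMeasurability

section ReproducingKernel

variable {X H : Type*} [MeasurableSpace X] [NormedAddCommGroup H] [InnerProductSpace ℝ H]
  {k : X → X → ℝ} {T : H → X → ℝ} {Φ : X → H} {ν : Measure X} [IsFiniteMeasure ν]

theorem hasFiniteIntegral_of_bounded_kernel (hk : ∀ x y, k x y = ⟪Φ x, Φ y⟫)
    (hbdd : ∃ C, ∀ x, k x x ≤ C) : HasFiniteIntegral Φ ν := by
  obtain ⟨C, hC⟩ := hbdd
  refine .of_bounded (C := √C) (ae_of_all ν fun x => Real.le_sqrt_of_sq_le ?_)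
  rw [← real_inner_self_eq_norm_sq, ← hk]
  exact hC x

theorem integrable_of_bounded_kernel [CompleteSpace H] (hk : ∀ x y, k x y = ⟪Φ x, Φ y⟫)
    (hrepro : ∀ f x, T f x = ⟪f, Φ x⟫) (hmeas : ∀ y, Measurable fun x => k x y)
    (hbdd : ∃ C, ∀ x, k x x ≤ C) (f : H) : Integrable (T f) ν := by
  have hΦ : ∀ y, Measurable fun x => ⟪Φ x, Φ y⟫ := fun y => by simpa only [hk] using hmeas y
  refine (integrable_inner_of_hasFiniteIntegral hΦ
    (hasFiniteIntegral_of_bounded_kernel hk hbdd) f).congr (ae_of_all ν fun x => ?_)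
  rw [hrepro, real_inner_comm]

end ReproducingKernel

theorem exists_inner_eq_svInt {X H : Type*} [MeasurableSpace X]
    [NormedAddCommGroup H] [InnerProductSpace ℝ H] [CompleteSpace H] {Φ : X → H}
    {μ : SignedMeasure X} (hΦ : ∀ f, Integrable (fun x => ⟪Φ x, f⟫) μ.totalVariation) :
    ∃ m : H, ∀ f, svInt μ (fun x => ⟪Φ x, f⟫) = ⟪f, m⟫ := by
  obtain ⟨p, hp⟩ := exists_inner_eq_integral_inner fun f => (hΦ f).left_of_add_measure
  obtain ⟨n, hn⟩ := exists_inner_eq_integral_inner fun f => (hΦ f).right_of_add_measure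
  refine ⟨p - n, fun f => ?_⟩
  rw [svInt, ← hp, ← hn, ← inner_sub_left, real_inner_comm]

theorem stmt19_general
    {X : Type*} [MeasurableSpace X]
    (k : X → X → ℝ)
    {H : Type*} [NormedAddCommGroup H] [InnerProductSpace ℝ H] [CompleteSpace H]
    (T : H → X → ℝ)
    (Φ : X → H)
    (hk : ∀ x y : X, k x y = ⟪Φ x, Φ y⟫)
    (hrepro : ∀ (f : H) (x : X), T f x = ⟪f, Φ x⟫)
    (μ : SignedMeasure X)
    (hint : ∀ f : H, Integrable (T f) μ.totalVariation) :
    ∃! lam : H,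
      (∀ f : H, svInt μ (T f) = ⟪f, lam⟫) ∧
      (∀ u : X, T lam u = svInt μ (fun x => k u x)) := by
  have hT : ∀ f, T f = fun x => ⟪Φ x, f⟫ := fun f =>
    funext fun x => (hrepro f x).trans (real_inner_comm _ _)
  obtain ⟨m, hm⟩ := exists_inner_eq_svInt fun f => hT f ▸ hint f
  have hrep : ∀ f, svInt μ (T f) = ⟪f, m⟫ := fun f => hT f ▸ hm f
  have hsection : ∀ u, T (Φ u) = fun x => k u x := fun u =>
    funext fun x => (hrepro (Φ u) x).trans (hk u x).symm
  refine ⟨m, ⟨hrep, fun u => ?_⟩, fun m' hm' => ext_inner_left ℝ fun f => ?_⟩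
  · rw [← hsection, hrep, hrepro, real_inner_comm]
  · rw [← hm'.1, hrep]

/-- Let `X` be a measurable space, `k` a measurable bounded symmetric
positive definite kernel on `X` with RKHS `H`, and `μ` a finite signed Borel measure on
`X`.  Then there is a unique `λ_μ ∈ H` with `∫ f dμ = ⟪f, λ_μ⟫` for all `f ∈ H`, and
`λ_μ(u) = ∫ k(u,x) dμ(x)` for all `u ∈ X`; in particular
`∫ f dμ = ⟪f, ∫ k(·,x) dμ(x)⟫` for every `f ∈ H`. -/
theorem stmt19
    {X : Type*} [MeasurableSpace X]
    (k : X → X → ℝ)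
    (hkmeas : Measurable fun p : X × X => k p.1 p.2)
    (hkbdd : ∃ C : ℝ, ∀ x y : X, |k x y| ≤ C)
    (hksymm : ∀ x y : X, k x y = k y x)
    {H : Type*} [NormedAddCommGroup H] [InnerProductSpace ℝ H] [CompleteSpace H]
    (T : H →ₗ[ℝ] (X → ℝ)) (hT : Function.Injective T)
    (Φ : X → H)
    (hk : ∀ x y : X, k x y = ⟪Φ x, Φ y⟫)
    (hrepro : ∀ (f : H) (x : X), T f x = ⟪f, Φ x⟫)
    (μ : MeasureTheory.SignedMeasure X) :
    ∃! lam : H,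
      (∀ f : H, svInt μ (T f) = ⟪f, lam⟫) ∧
      (∀ u : X, T lam u = svInt μ (fun x => k u x)) :=
  stmt19_general k T Φ hk hrepro μ <| integrable_of_bounded_kernel hk hrepro
    (fun _ => hkmeas.of_uncurry_right) (hkbdd.imp fun _ hC x => (le_abs_self _).trans (hC x x))
end
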